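/- arXiv:2404.16083 — 6 statements merged into one kernel-verified Lean document; each statement's English description precedes it below -/
import Mathlib

section
/- Let A be a complex d × (D·D) matrix (indexed by Fin d and Fin D × Fin D) with A·Aᴴ invertible, let A_R⁻¹ := Aᴴ·(A·Aᴴ)⁻¹ and P := A_R⁻¹·A, and let O_ℓ, O_r be unitary D × D complex matrices. Then there exists a d × d complex matrix O_p satisfying O_p·A = A·(O_ℓᵀ ⊗ O_r) if and only if (O_ℓᵀ ⊗ O_r) commutes with P. -/
open Matrix Kronecker

theorem push_aux {m n : Type*} [Fintype m] [DecidableEq m] [Fintype n] [DecidableEq n]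
    (A : Matrix m n ℂ) (hA : IsUnit (A * Aᴴ)) (U : Matrix n n ℂ) (hU : U * Uᴴ = 1) :
    (∃ Op : Matrix m m ℂ, Op * A = A * U) ↔ Commute U (Aᴴ * (A * Aᴴ)⁻¹ * A) := by
  have hd : IsUnit (A * Aᴴ).det := (Matrix.isUnit_iff_isUnit_det _).1 hA
  have h1 : (A * Aᴴ) * (A * Aᴴ)⁻¹ = 1 := Matrix.mul_nonsing_inv _ hd
  have h2 : (A * Aᴴ)⁻¹ * (A * Aᴴ) = 1 := Matrix.nonsing_inv_mul _ hd
  constructor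
  · rintro ⟨Op, h⟩
    have hs : Aᴴ * Opᴴ = Uᴴ * Aᴴ := by
      rw [← Matrix.conjTranspose_mul, h, Matrix.conjTranspose_mul]
    have h3 : Op * (A * Aᴴ) * Opᴴ = A * Aᴴ := by
      calc Op * (A * Aᴴ) * Opᴴ = (Op * A) * (Aᴴ * Opᴴ) := by simp only [Matrix.mul_assoc]
        _ = A * (U * Uᴴ) * Aᴴ := by rw [h, hs]; simp only [Matrix.mul_assoc]
        _ = A * Aᴴ := by rw [hU, Matrix.mul_one]
    generalize (A * Aᴴ)⁻¹ = K at *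
    generalize A * Aᴴ = G at *
    have h4 : Op * (G * Opᴴ * K) = 1 := by
      rw [← h1, ← Matrix.mul_assoc, ← Matrix.mul_assoc, h3]
    have h5 : (G * Opᴴ * K) * Op = 1 := _root_.mul_eq_one_comm.1 h4
    have h6 : Opᴴ * K * Op = K := by
      calc Opᴴ * K * Op = (K * G) * (Opᴴ * K * Op) := by rw [h2, Matrix.one_mul]
        _ = K * ((G * Opᴴ * K) * Op) := by simp only [Matrix.mul_assoc]
        _ = K := by rw [h5, Matrix.mul_one]
    have h7 : Uᴴ * (Aᴴ * K * A) * U = Aᴴ * K * A := by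
      calc Uᴴ * (Aᴴ * K * A) * U = (Uᴴ * Aᴴ) * K * (A * U) := by simp only [Matrix.mul_assoc]
        _ = Aᴴ * (Opᴴ * K * Op) * A := by rw [← h, ← hs]; simp only [Matrix.mul_assoc]
        _ = Aᴴ * K * A := by rw [h6]
    change U * (Aᴴ * K * A) = (Aᴴ * K * A) * U
    conv_lhs => rw [← h7]
    rw [← Matrix.mul_assoc, ← Matrix.mul_assoc U, hU, Matrix.one_mul]
  · intro h
    refine ⟨A * U * (Aᴴ * (A * Aᴴ)⁻¹), ?_⟩
    calc A * U * (Aᴴ * (A * Aᴴ)⁻¹) * A = A * (U * (Aᴴ * (A * Aᴴ)⁻¹ * A)) := by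
          simp only [Matrix.mul_assoc]
      _ = A * ((Aᴴ * (A * Aᴴ)⁻¹ * A) * U) := by rw [h.eq]
      _ = ((A * Aᴴ) * (A * Aᴴ)⁻¹) * (A * U) := by simp only [Matrix.mul_assoc]
      _ = A * U := by rw [h1, Matrix.one_mul]

/-- Theorem 1.1 (Existence of operator pushing): for a surjective virtual-to-physical
map `A` (rows linearly independent, i.e. `A * Aᴴ` invertible) and unitary virtual
operators `Oℓ`, `Or'`, a physical operator `Op` with `Op * A = A * (Oℓᵀ ⊗ₖ Or')`
exists iff `Oℓᵀ ⊗ₖ Or'` commutes with the rowspace projector `P = A_R⁻¹ * A`. -/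
theorem existence_operator_pushing {d D : ℕ}
    (A : Matrix (Fin d) (Fin D × Fin D) ℂ)
    (hA : IsUnit (A * Aᴴ))
    (Oℓ Or' : Matrix (Fin D) (Fin D) ℂ)
    (hOℓ : Oℓᴴ * Oℓ = 1 ∧ Oℓ * Oℓᴴ = 1)
    (hOr : Or'ᴴ * Or' = 1 ∧ Or' * Or'ᴴ = 1) :
    (∃ Op : Matrix (Fin d) (Fin d) ℂ, Op * A = A * (Oℓᵀ ⊗ₖ Or')) ↔
      Commute (Oℓᵀ ⊗ₖ Or') (Aᴴ * (A * Aᴴ)⁻¹ * A) := by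
  apply push_aux A hA
  rw [Matrix.conjTranspose_kronecker, ← Matrix.mul_kronecker_mul, hOr.2]
  have : Oℓᵀ * Oℓᵀᴴ = 1 := by
    have h := congrArg Matrix.transpose hOℓ.1
    rw [Matrix.transpose_mul, Matrix.transpose_one] at h
    exact h
  rw [this, Matrix.one_kronecker_one]
end

section
/- Let A be a complex d × (D·D) matrix (indexed by Fin d and Fin D × Fin D) with A·Aᴴ invertible, and let O_ℓ, O_r be unitary D × D complex matrices. Then there exists a UNITARY d × d complex matrix O_p satisfying O_p·A = A·(O_ℓᵀ ⊗ O_r) if and only if (O_ℓᵀ ⊗ O_r) commutes with Aᴴ·A. -/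
open Matrix Kronecker

theorem pushing_aux {m n : Type*} [Fintype m] [Fintype n] [DecidableEq m] [DecidableEq n]
    (A : Matrix m n ℂ) (hA : IsUnit (A * Aᴴ)) (V : Matrix n n ℂ)
    (hV : Vᴴ * V = 1) (hV' : V * Vᴴ = 1) :
    (∃ Op : Matrix m m ℂ, (Opᴴ * Op = 1 ∧ Op * Opᴴ = 1) ∧ Op * A = A * V) ↔
      Commute V (Aᴴ * A) := by
  constructor
  · rintro ⟨Op, ⟨h1, -⟩, h⟩
    have e : Aᴴ * A = Vᴴ * (Aᴴ * A) * V := by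
      calc Aᴴ * A = Aᴴ * (Opᴴ * Op) * A := by rw [h1, Matrix.mul_one]
        _ = (Op * A)ᴴ * (Op * A) := by simp only [conjTranspose_mul, Matrix.mul_assoc]
        _ = _ := by rw [h]; simp only [conjTranspose_mul, Matrix.mul_assoc]
    change V * (Aᴴ * A) = Aᴴ * A * V
    calc V * (Aᴴ * A) = V * (Vᴴ * (Aᴴ * A) * V) := by rw [← e]
      _ = (V * Vᴴ) * (Aᴴ * A * V) := by simp only [Matrix.mul_assoc]
      _ = _ := by rw [hV', Matrix.one_mul]
  · intro hc
    have hc : V * (Aᴴ * A) = Aᴴ * A * V := hc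
    obtain ⟨B, hB1⟩ := hA.exists_right_inv
    have hB2 : B * (A * Aᴴ) = 1 := mul_eq_one_comm.mp hB1
    have hBA : B * A * (Aᴴ * A) = A := by
      calc B * A * (Aᴴ * A) = B * (A * Aᴴ) * A := by simp only [Matrix.mul_assoc]
        _ = A := by rw [hB2, Matrix.one_mul]
    have h : A * V * Aᴴ * B * A = A * V := by
      calc A * V * Aᴴ * B * A = (B * A * (Aᴴ * A)) * V * Aᴴ * B * A := by rw [hBA]
        _ = B * A * (Aᴴ * A * V) * Aᴴ * B * A := by simp only [Matrix.mul_assoc]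
        _ = B * A * (V * (Aᴴ * A)) * Aᴴ * B * A := by rw [hc]
        _ = B * A * V * Aᴴ * (A * Aᴴ * B) * A := by simp only [Matrix.mul_assoc]
        _ = B * A * (V * (Aᴴ * A)) := by
          rw [hB1, Matrix.mul_one]; simp only [Matrix.mul_assoc]
        _ = B * A * (Aᴴ * A) * V := by rw [hc]; simp only [Matrix.mul_assoc]
        _ = A * V := by rw [hBA]
    generalize A * V * Aᴴ * B = Op at h
    have e : Aᴴ * (Opᴴ * Op) * A = Aᴴ * A := by
      calc Aᴴ * (Opᴴ * Op) * A = (Op * A)ᴴ * (Op * A) := by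
            simp only [conjTranspose_mul, Matrix.mul_assoc]
        _ = Vᴴ * (Aᴴ * A * V) := by rw [h]; simp only [conjTranspose_mul, Matrix.mul_assoc]
        _ = (Vᴴ * V) * (Aᴴ * A) := by rw [← hc]; simp only [Matrix.mul_assoc]
        _ = _ := by rw [hV, Matrix.one_mul]
    have u : Opᴴ * Op = 1 := by
      calc Opᴴ * Op = (B * (A * Aᴴ)) * (Opᴴ * Op) * (A * Aᴴ * B) := by
            rw [hB1, hB2, Matrix.one_mul, Matrix.mul_one]
        _ = B * A * (Aᴴ * (Opᴴ * Op) * A) * Aᴴ * B := by simp only [Matrix.mul_assoc]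
        _ = (B * (A * Aᴴ)) * (A * Aᴴ * B) := by rw [e]; simp only [Matrix.mul_assoc]
        _ = 1 := by rw [hB1, hB2, Matrix.one_mul]
    exact ⟨Op, ⟨u, mul_eq_one_comm.mp u⟩, h⟩

/-- Theorem 1.2 (Unitarity of operator pushing): for a surjective virtual-to-physical
map `A` (`A * Aᴴ` invertible) and unitary virtual operators `Oℓ`, `Or'`, a *unitary*
physical operator `Op` with `Op * A = A * (Oℓᵀ ⊗ₖ Or')` exists iff `Oℓᵀ ⊗ₖ Or'`
commutes with `Aᴴ * A`. -/
theorem unitarity_operator_pushing {d D : ℕ}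
    (A : Matrix (Fin d) (Fin D × Fin D) ℂ)
    (hA : IsUnit (A * Aᴴ))
    (Oℓ Or' : Matrix (Fin D) (Fin D) ℂ)
    (hOℓ : Oℓᴴ * Oℓ = 1 ∧ Oℓ * Oℓᴴ = 1)
    (hOr : Or'ᴴ * Or' = 1 ∧ Or' * Or'ᴴ = 1) :
    (∃ Op : Matrix (Fin d) (Fin d) ℂ,
        (Opᴴ * Op = 1 ∧ Op * Opᴴ = 1) ∧ Op * A = A * (Oℓᵀ ⊗ₖ Or')) ↔
      Commute (Oℓᵀ ⊗ₖ Or') (Aᴴ * A) := by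
  have hV : (Oℓᵀ ⊗ₖ Or')ᴴ * (Oℓᵀ ⊗ₖ Or') = 1 := by
    have t : Oℓᵀᴴ * Oℓᵀ = 1 := by
      have := congrArg Matrix.transpose hOℓ.2
      rwa [transpose_mul, transpose_one] at this
    rw [conjTranspose_kronecker, ← mul_kronecker_mul, t, hOr.1, one_kronecker_one]
  exact pushing_aux A hA _ hV (mul_eq_one_comm.mp hV)
end

section
/- Let A be a complex d × n matrix with A·Aᴴ invertible, let A_R⁻¹ := Aᴴ·(A·Aᴴ)⁻¹ and P := A_R⁻¹·A, and let O be an n × n complex matrix commuting with P. Then O_p := A·O·A_R⁻¹ satisfies O_p·A = A·O. -/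
open Matrix

/-- Constructive half of Theorem 1.1: if `O` commutes with the rowspace projector
`P = A_R⁻¹ * A` (where `A_R⁻¹ = Aᴴ * (A * Aᴴ)⁻¹` is the right inverse of `A`),
then `O_p := A * O * A_R⁻¹` solves the operator-pushing equation `O_p * A = A * O`. -/
theorem pushed_operator_solves {d n : ℕ}
    (A : Matrix (Fin d) (Fin n) ℂ) (hA : IsUnit (A * Aᴴ))
    (O : Matrix (Fin n) (Fin n) ℂ)
    (hO : Commute O (Aᴴ * (A * Aᴴ)⁻¹ * A)) :
    (A * O * (Aᴴ * (A * Aᴴ)⁻¹)) * A = A * O := by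
  have h1 : A * Aᴴ * (A * Aᴴ)⁻¹ = 1 :=
    Matrix.mul_nonsing_inv _ ((Matrix.isUnit_iff_isUnit_det _).mp hA)
  have h2 : A * (Aᴴ * (A * Aᴴ)⁻¹ * A) = A := by
    rw [← Matrix.mul_assoc, ← Matrix.mul_assoc, h1, Matrix.one_mul]
  rw [Matrix.mul_assoc (A * O), Matrix.mul_assoc A O, hO.eq, ← Matrix.mul_assoc, h2]
end

section
/- Let A be a complex d × n matrix with A·Aᴴ invertible, and let O_p (d × d) and O (n × n) be complex matrices satisfying O_p·A = A·O. Then O_pᴴ·O_p = 1 if and only if Oᴴ·(Aᴴ·A)·O = Aᴴ·A. -/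
open Matrix

/-- Unitarity criterion for the pushed operator (proof of Theorem 1.2): if
`O_p * A = A * O` with `A * Aᴴ` invertible, then `O_p` is an isometry
(`O_pᴴ * O_p = 1`) iff `Oᴴ * (Aᴴ * A) * O = Aᴴ * A`. -/
theorem pushed_operator_unitarity_criterion {d n : ℕ}
    (A : Matrix (Fin d) (Fin n) ℂ) (hA : IsUnit (A * Aᴴ))
    (Op : Matrix (Fin d) (Fin d) ℂ) (O : Matrix (Fin n) (Fin n) ℂ)
    (h : Op * A = A * O) :
    Opᴴ * Op = 1 ↔ Oᴴ * (Aᴴ * A) * O = Aᴴ * A := by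
  have key : Oᴴ * (Aᴴ * A) * O = Aᴴ * (Opᴴ * Op) * A := by
    have h1 : Oᴴ * (Aᴴ * A) * O = (A * O)ᴴ * (A * O) := by
      simp only [Matrix.conjTranspose_mul, Matrix.mul_assoc]
    rw [h1, ← h]
    simp only [Matrix.conjTranspose_mul, Matrix.mul_assoc]
  rw [key]
  constructor
  · intro hU
    rw [hU, Matrix.mul_one]
  · intro hE
    have h2 : (A * Aᴴ) * ((Opᴴ * Op) * (A * Aᴴ)) = (A * Aᴴ) * (1 * (A * Aᴴ)) := by
      have h3 := congrArg (fun M => A * M * Aᴴ) hE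
      simp only [Matrix.mul_assoc, Matrix.one_mul] at h3 ⊢
      exact h3
    exact hA.mul_right_cancel (hA.mul_left_cancel h2)
end

section
/- Let A be a complex d × n matrix with A·Aᴴ invertible, let P := Aᴴ·(A·Aᴴ)⁻¹·A, and let O be a unitary n × n complex matrix. If O commutes with Aᴴ·A, then O commutes with P. -/
open Matrix

/-- End of Appendix A: for `A` with `A * Aᴴ` invertible and a unitary `O`,
commutation with `Aᴴ * A` implies commutation with the rowspace projector
`P = Aᴴ * (A * Aᴴ)⁻¹ * A`; thus the condition of Theorem 1.2 subsumes that of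
Theorem 1.1. -/
theorem commute_gram_implies_commute_projector {d n : ℕ}
    (A : Matrix (Fin d) (Fin n) ℂ) (hA : IsUnit (A * Aᴴ))
    (O : Matrix (Fin n) (Fin n) ℂ)
    (hO : Oᴴ * O = 1 ∧ O * Oᴴ = 1)
    (h : Commute O (Aᴴ * A)) :
    Commute O (Aᴴ * (A * Aᴴ)⁻¹ * A) := by
  have hd : IsUnit (A * Aᴴ).det := (Matrix.isUnit_iff_isUnit_det _).mp hA
  have h1 : (A * Aᴴ) * (A * Aᴴ)⁻¹ = 1 := Matrix.mul_nonsing_inv _ hd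
  have h2 : (A * Aᴴ)⁻¹ * (A * Aᴴ) = 1 := Matrix.nonsing_inv_mul _ hd
  generalize (A * Aᴴ)⁻¹ = S at h1 h2 ⊢
  have hGQ : (Aᴴ * A) * (Aᴴ * S * S * A) = Aᴴ * S * A := by
    calc _ = Aᴴ * ((A * Aᴴ) * S) * S * A := by simp only [Matrix.mul_assoc]
      _ = _ := by rw [h1, Matrix.mul_one]
  have hQG : (Aᴴ * S * S * A) * (Aᴴ * A) = Aᴴ * S * A := by
    calc _ = Aᴴ * S * (S * (A * Aᴴ)) * A := by simp only [Matrix.mul_assoc]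
      _ = _ := by rw [h2, Matrix.mul_one]
  have hPG : (Aᴴ * S * A) * (Aᴴ * A) = Aᴴ * A := by
    calc _ = Aᴴ * (S * (A * Aᴴ)) * A := by simp only [Matrix.mul_assoc]
      _ = _ := by rw [h2, Matrix.mul_one]
  have hGP : (Aᴴ * A) * (Aᴴ * S * A) = Aᴴ * A := by
    calc _ = Aᴴ * ((A * Aᴴ) * S) * A := by simp only [Matrix.mul_assoc]
      _ = _ := by rw [h1, Matrix.mul_one]
  have h' : O * (Aᴴ * A) = (Aᴴ * A) * O := h
  show O * (Aᴴ * S * A) = (Aᴴ * S * A) * O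
  generalize Aᴴ * S * S * A = Q at *
  generalize Aᴴ * S * A = P at *
  generalize Aᴴ * A = G at *
  have a : O * P = P * O * P := by
    calc O * P = (O * G) * Q := by rw [Matrix.mul_assoc, hGQ]
      _ = (P * G) * O * Q := by rw [h', hPG]
      _ = P * (G * O) * Q := by simp only [Matrix.mul_assoc]
      _ = P * O * (G * Q) := by rw [← h']; simp only [Matrix.mul_assoc]
      _ = _ := by rw [hGQ]
  have b : P * O = P * O * P := by
    calc P * O = Q * (G * O) := by rw [← Matrix.mul_assoc, hQG]
      _ = Q * (O * (G * P)) := by rw [← h', hGP]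
      _ = Q * (O * G) * P := by simp only [Matrix.mul_assoc]
      _ = (Q * G) * O * P := by rw [h']; simp only [Matrix.mul_assoc]
      _ = _ := by rw [hQG]
  rw [a, ← b]
end

section
/- Let t be a real number, η := 1/√(1+t²), and define the 2 × 2 real matrices A⁰ := η·[[1,0],[t,0]] and A¹ := η·[[0,−t],[0,1]]. Then the 4 × 4 transfer matrix E := A⁰ ⊗ A⁰ + A¹ ⊗ A¹ has characteristic polynomial λ²·(λ − 1)·(λ − (1−t²)/(1+t²)); in particular its eigenvalues are 1, (1−t²)/(1+t²), 0, 0. -/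
open Matrix Kronecker Polynomial

/-- Transfer-matrix spectrum of the ℤ₂-symmetric family (Section III.C.1, with
`g = -t²`): the transfer matrix `E = A⁰ ⊗ A⁰ + A¹ ⊗ A¹` has characteristic
polynomial `λ²(λ-1)(λ-(1-t²)/(1+t²))`, hence eigenvalues `1, (1-t²)/(1+t²), 0, 0`,
substantiating the correlation length formula `ξ = |ln((1+g)/(1-g))|⁻¹`. -/
theorem z2_family_transfer_matrix_charpoly (t : ℝ) :
    let η : ℝ := 1 / Real.sqrt (1 + t ^ 2)
    let A0 : Matrix (Fin 2) (Fin 2) ℝ := η • !![1, 0; t, 0]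
    let A1 : Matrix (Fin 2) (Fin 2) ℝ := η • !![0, -t; 0, 1]
    (A0 ⊗ₖ A0 + A1 ⊗ₖ A1).charpoly =
      X ^ 2 * (X - 1) * (X - C ((1 - t ^ 2) / (1 + t ^ 2))) := by
  intro η A0 A1
  have hp : (1 + t ^ 2 : ℝ) ≠ 0 := by positivity
  have hη : η * η = (1 + t ^ 2)⁻¹ := by
    have h : Real.sqrt (1 + t ^ 2) * Real.sqrt (1 + t ^ 2) = 1 + t ^ 2 :=
      Real.mul_self_sqrt (by positivity)
    simp only [η]
    rw [one_div, ← mul_inv, h]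
  obtain ⟨s, hs⟩ : ∃ s : ℝ, s = (1 + t ^ 2)⁻¹ := ⟨_, rfl⟩
  rw [← hs] at hη
  have hE : Matrix.reindex (finProdFinEquiv (m := 2) (n := 2)) finProdFinEquiv
      (A0 ⊗ₖ A0 + A1 ⊗ₖ A1) =
      (!![s, 0, 0, s * t ^ 2; s * t, 0, 0, -(s * t); s * t, 0, 0, -(s * t);
        s * t ^ 2, 0, 0, s] : Matrix (Fin 4) (Fin 4) ℝ) := by
    rw [← hη]
    ext i j
    fin_cases i <;> fin_cases j <;>
      simp [A0, A1, finProdFinEquiv, Fin.divNat, Fin.modNat] <;> ring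
  rw [← Matrix.charpoly_reindex (finProdFinEquiv (m := 2) (n := 2)), hE]
  have h1 : (C s * (1 + C t ^ 2) : ℝ[X]) = 1 := by
    rw [← C_1, ← C_pow, ← C_add, ← C_mul, hs, inv_mul_cancel₀ hp]
  have h2 : (C ((1 - t ^ 2) / (1 + t ^ 2)) : ℝ[X]) = C s * (1 - C t ^ 2) := by
    rw [div_eq_mul_inv, ← hs, C_mul, C_sub, C_pow, C_1, mul_comm]
  rw [h2, Matrix.charpoly]
  simp [Matrix.charmatrix, Matrix.det_succ_row_zero, Fin.sum_univ_succ, Fin.succAbove]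
  linear_combination (X ^ 2 * (X - C s * (1 - C t ^ 2)) : ℝ[X]) * (-h1)
end
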